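/- arXiv:2504.12145 — 8 statements merged into one kernel-verified Lean document; each statement's English description precedes it below -/
import Mathlib

section
/- The quotient group (Grothendieck group of differences) of the commutative cancellative multiplicative monoid ℕ₀[x]* is a free abelian group. -/
open Polynomial

/-- `f ∈ ℕ₀[x]`: all coefficients of `f` are nonnegative. -/
def NNPoly (f : Polynomial ℤ) : Prop := ∀ n, 0 ≤ f.coeff n

/-- `f ∈ ℕ₀[x]* = ℕ₀[x] \ {0}`. -/
def NNStar (f : Polynomial ℤ) : Prop := NNPoly f ∧ f ≠ 0

/-- The image of a polynomial with integer coefficients in the field `ℚ(x)`. -/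
noncomputable def toRatFunc (f : Polynomial ℤ) : RatFunc ℚ :=
  algebraMap (Polynomial ℚ) (RatFunc ℚ) (f.map (Int.castRingHom ℚ))

/-- The quotient group of the cancellative monoid `ℕ₀[x]*`, realized as the subgroup of
the multiplicative group of `ℚ(x)` generated by `ℕ₀[x]*`. -/
noncomputable def quotGroupNNStar : Subgroup (RatFunc ℚ)ˣ :=
  Subgroup.closure {u : (RatFunc ℚ)ˣ | ∃ f, NNStar f ∧ (u : RatFunc ℚ) = toRatFunc f}

/-!
In the unique factorization domain `ℤ[X]`, with fraction field `ℚ(X)`, the divisor map embeds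
`ℚ(X)ˣ` modulo `ℤ[X]ˣ = {1, -1}` into a free abelian group. Every element of the quotient group of
`ℕ₀[x]*` is a fraction of polynomials with positive leading coefficients, so `-1` is not among them,
and the quotient group embeds into that free abelian group. A subgroup of a free abelian group is
free, even in infinite rank: well-order a basis and choose, for each index `i`, an element of the
subgroup that is supported on indices at most `i` and whose `i`-th coordinate generates the ideal of
all such coordinates.
-/

section SubmoduleOfFree

open Set

theorem exists_mem_supported_Iic {ι R : Type*} [LinearOrder ι] [Semiring R] {w : ι →₀ R}
    (hw : w ≠ 0) : ∃ i, w i ≠ 0 ∧ w ∈ Finsupp.supported R R (Iic i) := by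
  obtain ⟨i, hi, hmax⟩ := w.support.exists_max_image id (Finsupp.support_nonempty_iff.2 hw)
  exact ⟨i, Finsupp.mem_support_iff.1 hi, (Finsupp.mem_supported R w).2 hmax⟩

theorem linearIndependent_of_mem_supported_Iic {ι κ R : Type*} [LinearOrder ι] [Ring R]
    [NoZeroDivisors R] {f : κ → ι} (hf : Function.Injective f) {v : κ → ι →₀ R}
    (hv : ∀ k, v k ∈ Finsupp.supported R R (Iic (f k))) (hdiag : ∀ k, v k (f k) ≠ 0) :
    LinearIndependent R v := by
  rw [linearIndependent_iff]
  intro c hc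
  by_contra hne
  obtain ⟨m, hm, hmax⟩ := c.support.exists_max_image f (Finsupp.support_nonempty_iff.2 hne)
  have off_diag : ∀ k ∈ c.support, k ≠ m → (c k • v k) (f m) = 0 := by
    intro k hk hkm
    have hlt : f k < f m := (hmax k hk).lt_of_ne (hf.ne hkm)
    rw [Finsupp.smul_apply, (Finsupp.mem_supported' R _).1 (hv k) _ hlt.not_ge, smul_zero]
  have hcoord : (Finsupp.linearCombination R v c) (f m) = c m * v m (f m) := by
    rw [Finsupp.linearCombination_apply, Finsupp.sum, Finsupp.finsetSum_apply,
      Finset.sum_eq_single_of_mem m hm off_diag, Finsupp.smul_apply, smul_eq_mul]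
  rw [hc, Finsupp.zero_apply] at hcoord
  exact mul_ne_zero (Finsupp.mem_support_iff.1 hm) (hdiag m) hcoord.symm

theorem le_span_of_forall_apply_dvd {ι R : Type*} [LinearOrder ι] [WellFoundedLT ι] [CommRing R]
    {N : Submodule R (ι →₀ R)} {v : ι → ι →₀ R} (hv : ∀ i, v i ∈ N ⊓ Finsupp.supported R R (Iic i))
    (hdvd : ∀ i, ∀ w ∈ N ⊓ Finsupp.supported R R (Iic i), v i i ∣ w i) :
    N ≤ Submodule.span R (range fun i : {i // v i i ≠ 0} ↦ v i) := by
  set S := Submodule.span R (range fun i : {i // v i i ≠ 0} ↦ v i)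
  have smul_mem : ∀ i (c : R), v i i ≠ 0 → c • v i ∈ S := fun i c hi ↦
    S.smul_mem c (Submodule.subset_span ⟨⟨i, hi⟩, rfl⟩)
  have step : ∀ i, ∀ w ∈ N ⊓ Finsupp.supported R R (Iic i), w ∈ S := by
    intro i
    induction i using WellFoundedLT.induction with
    | ind i ih =>
      have mem_of_apply_eq_zero : ∀ w ∈ N ⊓ Finsupp.supported R R (Iic i), w i = 0 → w ∈ S := by
        intro w hw hwi
        by_cases hw0 : w = 0
        · exact hw0 ▸ S.zero_mem
        obtain ⟨j, hj, hwj⟩ := exists_mem_supported_Iic hw0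
        have hji : j ≤ i := (Finsupp.mem_supported R w).1 hw.2 (Finsupp.mem_support_iff.2 hj)
        exact ih j (hji.lt_of_ne fun h ↦ hj (h ▸ hwi)) w ⟨hw.1, hwj⟩
      intro w hw
      obtain ⟨c, hc⟩ := hdvd i w hw
      by_cases hi : v i i = 0
      · exact mem_of_apply_eq_zero w hw (by rw [hc, hi, zero_mul])
      · have hred : w - c • v i ∈ S := by
          refine mem_of_apply_eq_zero _ (sub_mem hw (Submodule.smul_mem _ c (hv i))) ?_
          rw [Finsupp.sub_apply, Finsupp.smul_apply, smul_eq_mul, hc, mul_comm, sub_self]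
        exact (S.sub_mem_iff_left (smul_mem i c hi)).1 hred
  intro w hw
  by_cases hw0 : w = 0
  · exact hw0 ▸ S.zero_mem
  obtain ⟨i, -, hwi⟩ := exists_mem_supported_Iic hw0
  exact step i w ⟨hw, hwi⟩

variable {R : Type*} [CommRing R] [IsPrincipalIdealRing R]

theorem exists_mem_forall_apply_dvd {M : Type*} [AddCommGroup M] [Module R M] (N : Submodule R M)
    (φ : M →ₗ[R] R) : ∃ v ∈ N, ∀ w ∈ N, φ v ∣ φ w := by
  obtain ⟨v, hv, hgen⟩ := Submodule.IsPrincipal.generator_mem (N.map φ)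
  refine ⟨v, hv, fun w hw ↦ ?_⟩
  rw [hgen, ← Submodule.IsPrincipal.mem_iff_generator_dvd]
  exact Submodule.mem_map_of_mem hw

theorem moduleFree_submodule_finsupp [IsDomain R] {ι : Type*} (N : Submodule R (ι →₀ R)) :
    Module.Free R N := by
  obtain ⟨_, _⟩ := exists_wellFoundedLT ι
  choose v hv hdvd using fun i ↦
    exists_mem_forall_apply_dvd (N ⊓ Finsupp.supported R R (Iic i)) (Finsupp.lapply i)
  let b : {i // v i i ≠ 0} → ι →₀ R := fun i ↦ v i
  have hb : LinearIndependent R b :=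
    linearIndependent_of_mem_supported_Iic Subtype.val_injective (fun i ↦ (hv i).2) Subtype.prop
  have hspan : Submodule.span R (range b) = N :=
    le_antisymm (Submodule.span_le.2 (range_subset_iff.2 fun i ↦ (hv i).1))
      (le_span_of_forall_apply_dvd hv hdvd)
  exact hspan ▸ Module.Free.of_basis (Module.Basis.span hb)

theorem moduleFree_of_injective [IsDomain R] {M F : Type*} [AddCommGroup M] [Module R M]
    [AddCommGroup F] [Module R F] [Module.Free R F] (φ : M →ₗ[R] F) (hφ : Function.Injective φ) :
    Module.Free R M := by
  let ψ := (Module.Free.chooseBasis R F).repr.toLinearMap ∘ₗ φ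
  have hψ : Function.Injective ψ := (LinearEquiv.injective _).comp hφ
  have := moduleFree_submodule_finsupp (LinearMap.range ψ)
  exact Module.Free.of_equiv (LinearEquiv.ofInjective ψ hψ).symm

end SubmoduleOfFree

section Divisor

open scoped nonZeroDivisors

variable {R : Type*} [CommRing R] [IsDomain R] [UniqueFactorizationMonoid R]
  [NormalizationMonoid R]

variable (R) in
open Classical in
/-- The divisor of an element of a unique factorization domain: the formal `ℤ`-linear combination
of its normalized prime factors, counted with multiplicity. Divisors are written multiplicatively
and the divisor of `0` is an added zero element, so that the map extends to the fraction field as a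
homomorphism of monoids with zero. -/
noncomputable def divisor : R →*₀ WithZero (Multiplicative (R →₀ ℤ)) where
  toFun x := if x = 0 then 0 else
    ↑(Multiplicative.ofAdd
      (Finsupp.mapRange.addMonoidHom (Nat.castAddMonoidHom ℤ) (factorization x)))
  map_zero' := if_pos rfl
  map_one' := by simp
  map_mul' x y := by
    by_cases hx : x = 0
    · simp [hx]
    by_cases hy : y = 0
    · simp [hy]
    rw [if_neg hx, if_neg hy, if_neg (mul_ne_zero hx hy), factorization_mul hx hy, map_add,
      ← WithZero.coe_mul, ← ofAdd_add]

theorem divisor_eq_zero_iff {x : R} : divisor R x = 0 ↔ x = 0 := by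
  simp [divisor]

theorem associated_of_divisor_eq {x y : R} (h : divisor R x = divisor R y) : Associated x y := by
  classical
  by_cases hx : x = 0
  · have hy : y = 0 := by rwa [hx, map_zero, eq_comm, divisor_eq_zero_iff] at h
    rw [hx, hy]
  have hy : y ≠ 0 := by rwa [Ne, ← divisor_eq_zero_iff, ← h, divisor_eq_zero_iff]
  simp only [divisor, MonoidWithZeroHom.coe_mk, ZeroHom.coe_mk, if_neg hx, if_neg hy,
    WithZero.coe_inj, Multiplicative.ofAdd.injective.eq_iff] at h
  exact associated_of_factorization_eq x y hx hy
    (Finsupp.mapRange_injective _ Nat.cast_zero Nat.cast_injective h)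

variable (R) (K : Type*) [Field K] [Algebra R K] [IsFractionRing R K]

/-- The extension of `divisor R` to the fraction field `K` of `R`. -/
noncomputable def fractionDivisor : K →*₀ WithZero (Multiplicative (R →₀ ℤ)) :=
  (IsLocalization.toLocalizationMap R⁰ K).lift₀ (divisor R) fun y ↦
    isUnit_iff_ne_zero.2 (divisor_eq_zero_iff.not.2 (nonZeroDivisors.ne_zero y.2))

variable {R} in
theorem fractionDivisor_algebraMap (x : R) :
    fractionDivisor R K (algebraMap R K x) = divisor R x :=
  (IsLocalization.toLocalizationMap R⁰ K).lift_eq _ x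

/-- The restriction of `fractionDivisor R K` to the multiplicative group of `K`, with values in a
free abelian group. -/
noncomputable def unitsDivisor : Kˣ →* Multiplicative (R →₀ ℤ) :=
  WithZero.unitsWithZeroEquiv.toMonoidHom.comp (Units.map (fractionDivisor R K).toMonoidHom)

theorem ker_unitsDivisor_le :
    (unitsDivisor R K).ker ≤ (Units.map (algebraMap R K : R →* K)).range := by
  intro u hu
  have hu1 : fractionDivisor R K u = 1 := by
    simpa [unitsDivisor, Units.ext_iff] using hu
  obtain ⟨x, y, hy, hxy⟩ := IsFractionRing.div_surjective R (u : K)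
  have hy0 : algebraMap R K y ≠ 0 := IsFractionRing.to_map_ne_zero_of_mem_nonZeroDivisors hy
  have hdiv : divisor R y = divisor R x := by
    rw [← fractionDivisor_algebraMap K x, (div_eq_iff hy0).1 hxy, map_mul, hu1, one_mul,
      fractionDivisor_algebraMap]
  obtain ⟨v, rfl⟩ := associated_of_divisor_eq hdiv
  refine ⟨v, Units.ext ?_⟩
  rw [← hxy, map_mul, mul_div_cancel_left₀ _ hy0]
  rfl

end Divisor

theorem moduleFree_additive_of_disjoint_range_units (R K : Type*) [CommRing R] [IsDomain R]
    [UniqueFactorizationMonoid R] [Field K] [Algebra R K] [IsFractionRing R K] {G : Subgroup Kˣ}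
    (hG : Disjoint G (Units.map (algebraMap R K : R →* K)).range) :
    Module.Free ℤ (Additive G) := by
  let := UniqueFactorizationMonoid.strongNormalizationMonoid (α := R)
  let φ : G →* Multiplicative (R →₀ ℤ) := (unitsDivisor R K).comp G.subtype
  have hφ : Function.Injective φ := by
    rw [injective_iff_map_eq_one]
    intro u hu
    exact Subtype.ext (Subgroup.disjoint_def.1 hG u.2 (ker_unitsDivisor_le R K hu))
  exact moduleFree_of_injective (MonoidHom.toAdditiveLeft φ).toIntLinearMap hφ

section RatFunc

open scoped nonZeroDivisors

attribute [local instance] Polynomial.algebra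

theorem isFractionRing_polynomial_ratFunc (A K : Type*) [CommRing A] [Field K]
    [Algebra A K] [IsFractionRing A K] : IsFractionRing A[X] (RatFunc K) := by
  have := Polynomial.isLocalization A⁰ K
  have hinj : Function.Injective (algebraMap A[X] K[X]) :=
    Polynomial.map_injective _ (IsFractionRing.injective A K)
  have hcomap : K[X]⁰.comap (algebraMap A[X] K[X]) = A[X]⁰ :=
    le_antisymm (comap_nonZeroDivisors_le_of_injective hinj)
      (nonZeroDivisors_le_comap_nonZeroDivisors_of_injective _ hinj)
  rw [IsFractionRing, ← hcomap]
  exact IsLocalization.localization_localization_isLocalization_of_has_all_units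
    (A⁰.map C) K[X]⁰ (RatFunc K) fun _ ↦ IsUnit.mem_nonZeroDivisors

theorem NNStar.leadingCoeff_pos {f : ℤ[X]} (hf : NNStar f) : 0 < f.leadingCoeff :=
  (hf.1 _).lt_of_ne' (leadingCoeff_ne_zero.2 hf.2)

theorem exists_mul_eq_of_mem_quotGroupNNStar {u : (RatFunc ℚ)ˣ} (hu : u ∈ quotGroupNNStar) :
    ∃ f g : ℤ[X], 0 < f.leadingCoeff ∧ 0 < g.leadingCoeff ∧
      u * algebraMap ℤ[X] (RatFunc ℚ) g = algebraMap ℤ[X] (RatFunc ℚ) f := by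
  induction hu using Subgroup.closure_induction with
  | mem u hu =>
    obtain ⟨f, hf, huf⟩ := hu
    exact ⟨f, 1, hf.leadingCoeff_pos, by simp, by rw [map_one, mul_one]; exact huf⟩
  | one => exact ⟨1, 1, by simp, by simp, by simp⟩
  | mul u v _ _ hu hv =>
    obtain ⟨f, g, hf, hg, hu⟩ := hu
    obtain ⟨f', g', hf', hg', hv⟩ := hv
    refine ⟨f * f', g * g', ?_, ?_, ?_⟩
    · rw [leadingCoeff_mul]; exact mul_pos hf hf'
    · rw [leadingCoeff_mul]; exact mul_pos hg hg'
    · rw [map_mul, map_mul, ← hu, ← hv, Units.val_mul, mul_mul_mul_comm]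
  | inv u _ hu =>
    obtain ⟨f, g, hf, hg, hu⟩ := hu
    exact ⟨g, f, hg, hf, by rw [← hu, Units.inv_mul_cancel_left]⟩

theorem units_eq_one_of_leadingCoeff_pos {v : ℤ[X]ˣ} (hv : 0 < (v : ℤ[X]).leadingCoeff) :
    v = 1 := by
  obtain ⟨r, hr, hrv⟩ := Polynomial.isUnit_iff.1 v.isUnit
  rw [← hrv, leadingCoeff_C] at hv
  have hr1 : r = 1 := (Int.isUnit_iff.1 hr).resolve_right (by lia)
  exact Units.ext (by rw [← hrv, hr1, map_one, Units.val_one])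

theorem disjoint_quotGroupNNStar_range_units :
    Disjoint quotGroupNNStar
      (Units.map (algebraMap ℤ[X] (RatFunc ℚ) : ℤ[X] →* RatFunc ℚ)).range := by
  have := isFractionRing_polynomial_ratFunc ℤ ℚ
  rw [Subgroup.disjoint_def]
  rintro _ hu ⟨v, rfl⟩
  obtain ⟨f, g, hf, hg, hfg⟩ := exists_mul_eq_of_mem_quotGroupNNStar hu
  have hvg : (v : ℤ[X]) * g = f := IsFractionRing.injective ℤ[X] (RatFunc ℚ) (by simpa using hfg)
  have hv : 0 < (v : ℤ[X]).leadingCoeff := by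
    rw [← hvg, leadingCoeff_mul] at hf
    exact pos_of_mul_pos_left hf hg.le
  rw [units_eq_one_of_leadingCoeff_pos hv, map_one]

end RatFunc

/-- The quotient group of `ℕ₀[x]*` is a free abelian group. -/
theorem stmt0 : Module.Free ℤ (Additive quotGroupNNStar) := by
  let := Polynomial.algebra ℤ ℚ
  have := isFractionRing_polynomial_ratFunc ℤ ℚ
  exact moduleFree_additive_of_disjoint_range_units ℤ[X] (RatFunc ℚ)
    disjoint_quotGroupNNStar_range_units
end

section
/- Let f₁(x), …, f_m(x) ∈ ℕ₀[x]*\{x} be atoms of ℕ₀[x]* of degree at least 1. Then there exists a polynomial z(x) ∈ ℤ[x] having at least one negative coefficient (so z ∉ ℕ₀[x]), irreducible in ℤ[x], with deg(z) ≥ 2·maxᵢ deg(fᵢ), and such that fᵢ(x)·z(x) ∈ ℕ₀[x]* for every i = 1, …, m. -/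
open Polynomial

/-- `f ∣_ℕ g`: divisibility in the monoid `ℕ₀[x]*`. -/
def DvdN (f g : Polynomial ℤ) : Prop := ∃ h, NNStar h ∧ g = f * h

/-- `f` is an atom of the monoid `ℕ₀[x]*`. -/
def IsAtomN (f : Polynomial ℤ) : Prop :=
  NNStar f ∧ f ≠ 1 ∧ ∀ g h, NNStar g → NNStar h → f = g * h → g = 1 ∨ h = 1

/-- `f` is a prime element of the monoid `ℕ₀[x]*`. -/
def IsPrimeN (f : Polynomial ℤ) : Prop :=
  IsAtomN f ∧ ∀ g h, NNStar g → NNStar h → DvdN f (g * h) → DvdN f g ∨ DvdN f h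

/-!
A polynomial `f ∈ ℕ₀[x]` with two nonzero terms can absorb an isolated negative coefficient:
multiply it by a `z` with coefficient `-2` at `X ^ N` and `2K` at all other degrees strictly
between `0` and `2N`, where `N` exceeds `deg f` and `K` bounds the coefficients of `f`. In `f z`
the negative term `-2 fⱼ` at degree `N + j` is compensated by `2K fₐ ≥ 2K`, for any `a ≠ j` with
`fₐ ≠ 0`. Taking leading coefficient `1` at `X ^ (2N)` and constant coefficient `2` makes `z`
Eisenstein at `2`. An atom of positive degree other than `X` has two nonzero terms, since `X`
divides every monomial of positive degree.
-/

theorem coeff_mul_eq_add_coeff_mul_erase {R : Type*} [Semiring R] (f g : R[X]) (N n : ℕ) :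
    (f * g).coeff n =
      (if N ≤ n then f.coeff (n - N) * g.coeff N else 0) + (f * g.erase N).coeff n := by
  conv_lhs => rw [← monomial_add_erase g N, ← C_mul_X_pow_eq_monomial]
  rw [mul_add, coeff_add, ← mul_assoc, coeff_mul_X_pow', coeff_mul_C]

theorem irreducible_X_pow_add_C_mul {R : Type*} [CommRing R] [IsDomain R] {p : R} (hp : Prime p)
    {q : R[X]} {n : ℕ} (hq : q.degree < n) (hq0 : ¬ p ∣ q.coeff 0) :
    Irreducible (X ^ n + C p * q) := by
  have hpq : (C p * q).degree < n := (degree_C_mul hp.ne_zero).trans_lt hq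
  have hmonic : (X ^ n + C p * q).Monic := monic_X_pow_add hpq
  have hdeg : (X ^ n + C p * q).degree = (n : WithBot ℕ) := by
    rw [degree_add_eq_left_of_degree_lt (by rwa [degree_X_pow]), degree_X_pow]
  have hn : n ≠ 0 := by
    rintro rfl
    rw [degree_eq_bot.1 (Nat.WithBot.lt_zero_iff.1 hq), coeff_zero] at hq0
    exact hq0 (dvd_zero p)
  have hprime : (Ideal.span {p}).IsPrime := (Ideal.span_singleton_prime hp.ne_zero).2 hp
  have hcoeff : ∀ k ≠ n, (X ^ n + C p * q).coeff k = p * q.coeff k := fun k hk => by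
    rw [coeff_add, coeff_X_pow, if_neg hk, zero_add, coeff_C_mul]
  refine irreducible_of_eisenstein_criterion hprime ?_ (fun k hk => ?_) ?_ ?_ hmonic.isPrimitive
  · rw [hmonic.leadingCoeff]
    exact hprime.one_notMem
  · rw [hdeg, Nat.cast_lt] at hk
    rw [Ideal.mem_span_singleton, hcoeff k hk.ne]
    exact dvd_mul_right _ _
  · rw [hdeg]
    exact_mod_cast hn.bot_lt
  · rwa [Ideal.span_singleton_pow, Ideal.mem_span_singleton, hcoeff 0 hn.symm, sq,
      mul_dvd_mul_iff_left hp.ne_zero]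

theorem NNPoly.coeff_mul_coeff_le {f g : ℤ[X]} (hf : NNPoly f) (hg : NNPoly g) (a b : ℕ) :
    f.coeff a * g.coeff b ≤ (f * g).coeff (a + b) := by
  rw [coeff_mul]
  exact Finset.single_le_sum (f := fun p : ℕ × ℕ => f.coeff p.1 * g.coeff p.2)
    (fun p _ => mul_nonneg (hf p.1) (hg p.2))
    (Finset.HasAntidiagonal.mem_antidiagonal.2 rfl : (a, b) ∈ _)

theorem NNPoly.mul {f g : ℤ[X]} (hf : NNPoly f) (hg : NNPoly g) : NNPoly (f * g) := by
  intro n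
  rw [coeff_mul]
  exact Finset.sum_nonneg fun p _ => mul_nonneg (hf p.1) (hg p.2)

theorem NNPoly.coeff_le_eval_one {f : ℤ[X]} (hf : NNPoly f) (n : ℕ) :
    f.coeff n ≤ f.eval 1 := by
  rw [eval_eq_sum, Polynomial.sum]
  simp only [one_pow, mul_one]
  by_cases hn : n ∈ f.support
  · exact Finset.single_le_sum (f := f.coeff) (fun k _ => hf k) hn
  · rw [notMem_support_iff.1 hn]
    exact Finset.sum_nonneg fun k _ => hf k

theorem NNPoly.mul_of_erase {f z : ℤ[X]} {N : ℕ} {K : ℤ} (hf : NNPoly f)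
    (hcard : 1 < f.support.card) (hdeg : f.natDegree < N) (hfK : ∀ n, f.coeff n ≤ K)
    (hz : NNPoly (z.erase N)) (hzN : z.coeff N ≤ 0)
    (hzK : ∀ n, 0 < n → n < 2 * N → n ≠ N → -z.coeff N * K ≤ z.coeff n) :
    NNPoly (f * z) := by
  intro n
  have hsplit := coeff_mul_eq_add_coeff_mul_erase f z N n
  have hrest : 0 ≤ (f * z.erase N).coeff n := hf.mul hz n
  by_cases hj : N ≤ n ∧ f.coeff (n - N) ≠ 0
  · obtain ⟨hNn, hj⟩ := hj
    obtain ⟨a, ha, haj⟩ := Finset.exists_mem_ne hcard (n - N)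
    have ha_le : a ≤ f.natDegree := le_natDegree_of_mem_supp a ha
    have hj_le : n - N ≤ f.natDegree := le_natDegree_of_ne_zero hj
    have hfa : 1 ≤ f.coeff a := (hf a).lt_of_ne' (mem_support_iff.1 ha)
    have hzb : -z.coeff N * K ≤ z.coeff (n - a) := hzK _ (by omega) (by omega) (by omega)
    have herase : (z.erase N).coeff (n - a) = z.coeff (n - a) := erase_ne _ (by omega)
    calc 0 ≤ -z.coeff N * (K - f.coeff (n - N)) :=
          mul_nonneg (neg_nonneg.2 hzN) (sub_nonneg.2 (hfK _))
      _ = f.coeff (n - N) * z.coeff N + -z.coeff N * K := by ring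
      _ ≤ f.coeff (n - N) * z.coeff N + (z.erase N).coeff (n - a) := by rw [herase]; gcongr
      _ ≤ f.coeff (n - N) * z.coeff N + f.coeff a * (z.erase N).coeff (n - a) := by
          gcongr
          exact le_mul_of_one_le_left (hz _) hfa
      _ ≤ f.coeff (n - N) * z.coeff N + (f * z.erase N).coeff (a + (n - a)) := by
          gcongr
          exact hf.coeff_mul_coeff_le hz a (n - a)
      _ = (f * z).coeff n := by rw [hsplit, if_pos hNn, Nat.add_sub_of_le (by omega)]
  · rw [hsplit]
    split_ifs with hNn
    · rw [not_and_not_right.1 hj hNn, zero_mul, zero_add]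
      exact hrest
    · rwa [zero_add]

/-- The polynomial `r` in `dipPoly N K = X ^ (2 * N) + 2 * r`, split off because
Eisenstein's criterion at `2` only asks for the degree and the constant coefficient of `r`. -/
noncomputable def dipTail (N K : ℕ) : ℤ[X] :=
  1 - X ^ N + C (K : ℤ) * ∑ i ∈ (Finset.Ioo 0 (2 * N)).erase N, X ^ i

/-- The multiplier `z`: for `N > 0`, its coefficients in degrees `0, …, 2 * N` are
`2, 2K, …, 2K, -2, 2K, …, 2K, 1`, with the only negative one in the middle, at `X ^ N`. -/
noncomputable def dipPoly (N K : ℕ) : ℤ[X] :=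
  X ^ (2 * N) + C 2 * dipTail N K

theorem coeff_dipTail (N K n : ℕ) :
    (dipTail N K).coeff n = (if n = 0 then 1 else 0) - (if n = N then 1 else 0) +
      (if n ≠ N ∧ 0 < n ∧ n < 2 * N then (K : ℤ) else 0) := by
  simp [dipTail, coeff_one, coeff_X_pow]

theorem coeff_dipPoly (N K n : ℕ) :
    (dipPoly N K).coeff n = (if n = 2 * N then 1 else 0) + 2 * (dipTail N K).coeff n := by
  rw [dipPoly, coeff_add, coeff_X_pow, coeff_C_mul]

theorem degree_dipTail_lt {N : ℕ} (hN : 0 < N) (K : ℕ) : (dipTail N K).degree < (2 * N : ℕ) := by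
  rw [degree_lt_iff_coeff_zero]
  intro n hn
  rw [coeff_dipTail, if_neg (by omega), if_neg (by omega), if_neg (by omega)]
  norm_num

theorem natDegree_dipPoly {N : ℕ} (hN : 0 < N) (K : ℕ) : (dipPoly N K).natDegree = 2 * N := by
  have hlt : (C 2 * dipTail N K).degree < (X ^ (2 * N) : ℤ[X]).degree := by
    rw [degree_C_mul two_ne_zero, degree_X_pow]
    exact degree_dipTail_lt hN K
  rw [dipPoly, natDegree_add_eq_left_of_degree_lt hlt, natDegree_X_pow]

theorem irreducible_dipPoly {N : ℕ} (hN : 0 < N) (K : ℕ) : Irreducible (dipPoly N K) := by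
  refine irreducible_X_pow_add_C_mul Int.prime_two (degree_dipTail_lt hN K) ?_
  rw [coeff_dipTail, if_pos rfl, if_neg hN.ne, if_neg (by omega)]
  norm_num

theorem coeff_dipPoly_self {N : ℕ} (hN : 0 < N) (K : ℕ) : (dipPoly N K).coeff N = -2 := by
  rw [coeff_dipPoly, coeff_dipTail, if_neg (by omega), if_neg hN.ne', if_pos rfl,
    if_neg (by omega)]
  norm_num

theorem coeff_dipPoly_of_lt {N n : ℕ} (K : ℕ) (hn0 : 0 < n) (hn : n < 2 * N) (hnN : n ≠ N) :
    (dipPoly N K).coeff n = 2 * K := by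
  rw [coeff_dipPoly, coeff_dipTail, if_neg hn.ne, if_neg hn0.ne', if_neg hnN,
    if_pos ⟨hnN, hn0, hn⟩]
  ring

theorem not_nnPoly_dipPoly {N : ℕ} (hN : 0 < N) (K : ℕ) : ¬ NNPoly (dipPoly N K) := by
  intro h
  have := h N
  rw [coeff_dipPoly_self hN K] at this
  norm_num at this

theorem nnPoly_erase_dipPoly (N K : ℕ) : NNPoly ((dipPoly N K).erase N) := by
  intro n
  rw [coeff_erase]
  split_ifs with hn
  · exact le_rfl
  · rw [coeff_dipPoly, coeff_dipTail, if_neg hn]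
    split_ifs <;> positivity

theorem NNPoly.mul_dipPoly {f : ℤ[X]} {N K : ℕ} (hf : NNPoly f) (hcard : 1 < f.support.card)
    (hdeg : f.natDegree < N) (hfK : ∀ n, f.coeff n ≤ K) : NNPoly (f * dipPoly N K) := by
  have hN : 0 < N := Nat.zero_lt_of_lt hdeg
  have hdip := coeff_dipPoly_self hN K
  refine hf.mul_of_erase hcard hdeg hfK (nnPoly_erase_dipPoly N K) (by rw [hdip]; norm_num) ?_
  intro n hn0 hn hnN
  rw [hdip, coeff_dipPoly_of_lt K hn0 hn hnN, neg_neg]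

theorem IsAtomN.one_lt_card_support {f : ℤ[X]} (hf : IsAtomN f) (hX : f ≠ X)
    (hdeg : 1 ≤ f.natDegree) : 1 < f.support.card := by
  by_contra! hcard
  obtain ⟨n, a, rfl⟩ := card_support_le_one_iff_monomial.1 hcard
  have ha : a ≠ 0 := by rintro rfl; exact hf.1.2 (map_zero _)
  obtain ⟨k, rfl⟩ : ∃ k, n = k + 1 :=
    Nat.exists_eq_add_of_le' (by rwa [natDegree_monomial_eq n ha] at hdeg)
  have hfactor : monomial (k + 1) a = X * monomial k a := (X_mul_monomial k a).symm
  have hXstar : NNStar X := by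
    refine ⟨fun n => ?_, X_ne_zero⟩
    rw [coeff_X]
    split_ifs <;> norm_num
  have hkstar : NNStar (monomial k a) := by
    refine ⟨fun n => ?_, by simpa using ha⟩
    rw [← coeff_X_mul, ← hfactor]
    exact hf.1.1 (n + 1)
  rcases hf.2.2 X (monomial k a) hXstar hkstar hfactor with h | h
  · exact not_isUnit_X (h ▸ isUnit_one)
  · exact hX (by rw [hfactor, h, mul_one])

theorem stmt1_general {ι : Type*} [Finite ι] (f : ι → Polynomial ℤ) (hf : ∀ i, NNPoly (f i))
    (hcard : ∀ i, 1 < (f i).support.card) :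
    ∃ z : Polynomial ℤ, ¬ NNPoly z ∧ Irreducible z ∧
      (∀ i, 2 * (f i).natDegree ≤ z.natDegree) ∧
      (∀ i, NNStar (f i * z)) := by
  obtain ⟨D, hD⟩ := Finite.exists_le fun i => (f i).natDegree
  obtain ⟨K, hK⟩ := Finite.exists_le fun i => ((f i).eval 1).toNat
  have hN : 0 < D + 1 := D.succ_pos
  have hirr : Irreducible (dipPoly (D + 1) K) := irreducible_dipPoly hN K
  refine ⟨dipPoly (D + 1) K, not_nnPoly_dipPoly hN K, hirr, fun i => ?_, fun i => ⟨?_, ?_⟩⟩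
  · rw [natDegree_dipPoly hN K]
    have := hD i
    omega
  · exact (hf i).mul_dipPoly (hcard i) (Nat.lt_succ_of_le (hD i)) fun n =>
      ((hf i).coeff_le_eval_one n).trans (Int.toNat_le.1 (hK i))
  · refine mul_ne_zero (fun h => ?_) hirr.ne_zero
    simpa [h] using hcard i

/-- Lemma 3 (first part): for atoms `f₁, …, f_m ≠ x` of `ℕ₀[x]*` of degree at least 1,
there is `z ∈ ℤ[x] \ ℕ₀[x]`, irreducible in `ℤ[x]`, with `deg z ≥ 2·maxᵢ deg fᵢ` and
`fᵢ·z ∈ ℕ₀[x]*` for every `i`. -/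
theorem stmt1 (m : ℕ) (hm : 0 < m) (f : Fin m → Polynomial ℤ)
    (hatom : ∀ i, IsAtomN (f i)) (hx : ∀ i, f i ≠ X)
    (hdeg : ∀ i, 1 ≤ (f i).natDegree) :
    ∃ z : Polynomial ℤ, ¬ NNPoly z ∧ Irreducible z ∧
      (∀ i, 2 * (f i).natDegree ≤ z.natDegree) ∧
      (∀ i, NNStar (f i * z)) := by
  exact stmt1_general f (fun i => (hatom i).1.1)
    fun i => (hatom i).one_lt_card_support (hx i) (hdeg i)
end

section
/- Let f(x) ≠ x be an atom of ℕ₀[x]* with deg(f) ≥ 1. Then there exist h(x) ∈ ℕ₀[x]* of degree at least 1 and z(x) ∈ ℤ[x]\ℕ₀[x] such that f(x) does not divide h(x) in ℕ₀[x]* (f ∤_ℕ h) and both f(x)·z(x) and h(x)·z(x) belong to ℕ₀[x]*. -/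
open Polynomial

/-!
If `g ∈ ℕ₀[x]` has at least two terms and degree at most `n`, then multiplying it by
`T = ∑ X ^ i`, over `i ≤ 2 n` with `i ≠ n`, gives a positive coefficient at `n + s` for each `s` in
the support of `g`: pick another exponent `t ≠ s` of `g` and use the term of `T` of exponent
`n + s - t`. Hence `g * (A * T - X ^ n)` has nonnegative coefficients as soon as `A` bounds the
coefficients of `g`. Large `A` and `n` serve finitely many such `g` at once, in particular `f` and
`f + 1`, and a nonconstant `f` does not divide `f + 1`.
-/

theorem nnPoly_one : NNPoly 1 := fun n => by
  rw [coeff_one]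
  split_ifs <;> decide

theorem nnPoly_X : NNPoly X := fun n => by
  rw [coeff_X]
  split_ifs <;> decide

namespace NNPoly

variable {g h : ℤ[X]}

theorem add (hg : NNPoly g) (hh : NNPoly h) : NNPoly (g + h) := fun n => by
  rw [coeff_add]
  exact add_nonneg (hg n) (hh n)

theorem coeff_mul_coeff_le_coeff_mul (hg : NNPoly g) (hh : NNPoly h) (a b : ℕ) :
    g.coeff a * h.coeff b ≤ (g * h).coeff (a + b) := by
  rw [coeff_mul]
  exact Finset.single_le_sum (f := fun p : ℕ × ℕ => g.coeff p.1 * h.coeff p.2)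
    (fun p _ => mul_nonneg (hg p.1) (hh p.2)) (a := (a, b))
    (Finset.HasAntidiagonal.mem_antidiagonal.2 rfl)

theorem mul_s2 (hg : NNPoly g) (hh : NNPoly h) : NNPoly (g * h) := fun n => by
  rw [coeff_mul]
  exact Finset.sum_nonneg fun p _ => mul_nonneg (hg p.1) (hh p.2)

theorem coeff_le_eval_one_s2 (hg : NNPoly g) (i : ℕ) : g.coeff i ≤ g.eval 1 := by
  simp only [eval_eq_sum, Polynomial.sum, one_pow, mul_one]
  by_cases hi : i ∈ g.support
  · exact Finset.single_le_sum (fun j _ => hg j) hi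
  · rw [notMem_support_iff.1 hi]
    exact Finset.sum_nonneg fun j _ => hg j

theorem support_subset_support_add (hg : NNPoly g) (hh : NNPoly h) :
    g.support ⊆ (g + h).support := fun i hi => by
  rw [mem_support_iff, coeff_add]
  exact (add_pos_of_pos_of_nonneg ((hg i).lt_of_ne' (mem_support_iff.1 hi)) (hh i)).ne'

end NNPoly

/-- The polynomial `∑ X ^ i` over `i ≤ 2 n` with `i ≠ n`: a geometric sum with its middle term
removed. For `g ∈ ℕ₀[x]` of degree at most `n` with at least two terms, a constant multiple of
`g * puncturedGeomSum ℤ n` dominates `g * X ^ n` coefficientwise. -/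
noncomputable def puncturedGeomSum (R : Type*) [Semiring R] (n : ℕ) : R[X] :=
  ∑ i ∈ (Finset.range (2 * n + 1)).erase n, X ^ i

theorem coeff_puncturedGeomSum (R : Type*) [Semiring R] (n i : ℕ) :
    (puncturedGeomSum R n).coeff i = if i ≠ n ∧ i ≤ 2 * n then 1 else 0 := by
  simp only [puncturedGeomSum, finsetSum_coeff, coeff_X_pow, Finset.sum_ite_eq, Finset.mem_erase,
    Finset.mem_range, Nat.lt_succ_iff]

theorem nnPoly_puncturedGeomSum (n : ℕ) : NNPoly (puncturedGeomSum ℤ n) := fun i => by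
  rw [coeff_puncturedGeomSum]
  split_ifs <;> decide

theorem not_nnPoly_C_mul_puncturedGeomSum_sub_X_pow (A : ℤ) (n : ℕ) :
    ¬ NNPoly (C A * puncturedGeomSum ℤ n - X ^ n) := fun h => by
  have hn := h n
  simp [coeff_puncturedGeomSum] at hn

theorem NNPoly.one_le_coeff_mul_puncturedGeomSum {g : ℤ[X]} {n s : ℕ} (hg : NNPoly g)
    (hsupp : g.support.Nontrivial) (hdeg : g.natDegree ≤ n) (hs : s ∈ g.support) :
    1 ≤ (g * puncturedGeomSum ℤ n).coeff (n + s) := by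
  obtain ⟨t, ht, hts⟩ := hsupp.exists_ne s
  have hsn : s ≤ n := (le_natDegree_of_mem_supp s hs).trans hdeg
  have htn : t ≤ n := (le_natDegree_of_mem_supp t ht).trans hdeg
  calc
    1 ≤ g.coeff t := (hg t).lt_of_ne' (mem_support_iff.1 ht)
    _ = g.coeff t * (puncturedGeomSum ℤ n).coeff (n + s - t) := by
      rw [coeff_puncturedGeomSum, if_pos (by omega), mul_one]
    _ ≤ (g * puncturedGeomSum ℤ n).coeff (t + (n + s - t)) :=
      hg.coeff_mul_coeff_le_coeff_mul (nnPoly_puncturedGeomSum n) _ _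
    _ = (g * puncturedGeomSum ℤ n).coeff (n + s) := by rw [Nat.add_sub_cancel' (by omega)]

theorem NNPoly.mul_C_mul_puncturedGeomSum_sub_X_pow {g : ℤ[X]} {n : ℕ} {A : ℤ} (hg : NNPoly g)
    (hsupp : g.support.Nontrivial) (hdeg : g.natDegree ≤ n) (hA : ∀ i, g.coeff i ≤ A) :
    NNPoly (g * (C A * puncturedGeomSum ℤ n - X ^ n)) := fun j => by
  have hA₀ : 0 ≤ A := (hg 0).trans (hA 0)
  have hprod : 0 ≤ A * (g * puncturedGeomSum ℤ n).coeff j :=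
    mul_nonneg hA₀ (hg.mul_s2 (nnPoly_puncturedGeomSum n) j)
  rw [mul_sub, mul_left_comm, coeff_sub, coeff_C_mul, coeff_mul_X_pow', sub_nonneg]
  split_ifs with hnj
  · obtain ⟨s, rfl⟩ := Nat.exists_eq_add_of_le hnj
    rw [Nat.add_sub_cancel_left]
    by_cases hs : s ∈ g.support
    · exact (hA s).trans
        (le_mul_of_one_le_right hA₀ (hg.one_le_coeff_mul_puncturedGeomSum hsupp hdeg hs))
    · rwa [notMem_support_iff.1 hs]
  · exact hprod

theorem exists_not_nnPoly_forall_nnPoly_mul (S : Finset ℤ[X])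
    (hS : ∀ g ∈ S, NNPoly g ∧ g.support.Nontrivial) :
    ∃ z : ℤ[X], ¬ NNPoly z ∧ ∀ g ∈ S, NNPoly (g * z) := by
  set n := S.sup natDegree
  set A := ∑ g ∈ S, g.eval 1
  have heval_nonneg : ∀ g ∈ S, 0 ≤ g.eval 1 := fun g hg =>
    ((hS g hg).1 0).trans ((hS g hg).1.coeff_le_eval_one_s2 0)
  have hA : ∀ g ∈ S, ∀ i, g.coeff i ≤ A := fun g hg i =>
    ((hS g hg).1.coeff_le_eval_one_s2 i).trans (Finset.single_le_sum heval_nonneg hg)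
  exact ⟨C A * puncturedGeomSum ℤ n - X ^ n, not_nnPoly_C_mul_puncturedGeomSum_sub_X_pow A n,
    fun g hg => (hS g hg).1.mul_C_mul_puncturedGeomSum_sub_X_pow (hS g hg).2
      (Finset.le_sup (f := natDegree) hg) (hA g hg)⟩

theorem natDegree_pos_of_support_nontrivial {R : Type*} [Semiring R] {p : R[X]}
    (hp : p.support.Nontrivial) : 0 < p.natDegree :=
  Nat.succ_lt_succ_iff.1
    ((Finset.one_lt_card_iff_nontrivial.2 hp).trans_le p.card_supp_le_succ_natDegree)

theorem not_dvd_add_one_of_natDegree_pos {R : Type*} [CommRing R] [NoZeroDivisors R] {p : R[X]}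
    (hp : 0 < p.natDegree) : ¬ p ∣ p + 1 := fun h =>
  not_isUnit_of_natDegree_pos p hp (isUnit_of_dvd_one (dvd_add_self_left.1 h))

theorem IsAtomN.coeff_zero_ne_zero {f : ℤ[X]} (hf : IsAtomN f) (hfx : f ≠ X) :
    f.coeff 0 ≠ 0 := fun h₀ => by
  obtain ⟨⟨hnn, hne⟩, -, hatom⟩ := hf
  obtain ⟨q, rfl⟩ := X_dvd_iff.2 h₀
  have hq : NNStar q :=
    ⟨fun n => by simpa only [coeff_X_mul] using hnn (n + 1), right_ne_zero_of_mul hne⟩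
  rcases hatom X q ⟨nnPoly_X, X_ne_zero⟩ hq rfl with hX | rfl
  · exact X_ne_C 1 hX
  · exact hfx (mul_one X)

theorem IsAtomN.support_nontrivial {f : ℤ[X]} (hf : IsAtomN f) (hfx : f ≠ X)
    (hdeg : 1 ≤ f.natDegree) : f.support.Nontrivial :=
  ⟨0, mem_support_iff.2 (hf.coeff_zero_ne_zero hfx), f.natDegree,
    natDegree_mem_support_of_nonzero hf.1.2, by omega⟩

theorem stmt2_general (f : ℤ[X]) (hf : NNPoly f) (hsupp : f.support.Nontrivial) :
    ∃ h z : ℤ[X], NNStar h ∧ 1 ≤ h.natDegree ∧ ¬ NNPoly z ∧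
      ¬ DvdN f h ∧ NNStar (f * z) ∧ NNStar (h * z) := by
  have hf₁ : NNPoly (f + 1) := hf.add nnPoly_one
  have hsupp₁ : (f + 1).support.Nontrivial :=
    hsupp.mono (hf.support_subset_support_add nnPoly_one)
  obtain ⟨z, hz, hmul⟩ := exists_not_nnPoly_forall_nnPoly_mul {f, f + 1} <| by
    simpa only [Finset.forall_mem_insert, Finset.mem_singleton, forall_eq]
      using ⟨⟨hf, hsupp⟩, hf₁, hsupp₁⟩
  simp only [Finset.forall_mem_insert, Finset.mem_singleton, forall_eq] at hmul
  have hf_ne : f ≠ 0 := support_nonempty.1 hsupp.nonempty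
  have hf₁_ne : f + 1 ≠ 0 := support_nonempty.1 hsupp₁.nonempty
  have hz_ne : z ≠ 0 := fun h => hz fun n => by rw [h, coeff_zero]
  have hndvd : ¬ DvdN f (f + 1) := fun ⟨q, _, hq⟩ =>
    not_dvd_add_one_of_natDegree_pos (natDegree_pos_of_support_nontrivial hsupp) ⟨q, hq⟩
  exact ⟨f + 1, z, ⟨hf₁, hf₁_ne⟩, natDegree_pos_of_support_nontrivial hsupp₁, hz, hndvd,
    ⟨hmul.1, mul_ne_zero hf_ne hz_ne⟩, ⟨hmul.2, mul_ne_zero hf₁_ne hz_ne⟩⟩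

/-- Lemma 3 (second part): if `f ≠ x` is an atom of `ℕ₀[x]*` of degree at least 1, then
there exist `h ∈ ℕ₀[x]*` of degree at least 1 and `z ∈ ℤ[x] \ ℕ₀[x]` such that
`f ∤_ℕ h` and both `f·z` and `h·z` belong to `ℕ₀[x]*`. -/
theorem stmt2 (f : Polynomial ℤ) (hf : IsAtomN f) (hfx : f ≠ X) (hdeg : 1 ≤ f.natDegree) :
    ∃ h z : Polynomial ℤ, NNStar h ∧ 1 ≤ h.natDegree ∧ ¬ NNPoly z ∧
      ¬ DvdN f h ∧ NNStar (f * z) ∧ NNStar (h * z) :=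
  stmt2_general f hf.1.1 (hf.support_nontrivial hfx hdeg)
end

section
/- The prime elements of the multiplicative monoid ℕ₀[x]* are exactly the prime integers (viewed as constant polynomials) and the polynomial x. -/
open Polynomial

/-!
A constant prime `p`, or `X`, is prime in `ℤ[X]`, and dividing by it preserves nonnegativity of the
coefficients, so it stays prime in `ℕ₀[x]*`. Conversely, let `f` have positive degree and
`f(0) ≠ 0`. Choose `q` with exactly one negative coefficient, so shallow that multiplying by either
`f` or `f + 1` fills it in. Then `f` divides `(q * f) * (f + 1) = f * (q * (f + 1))` in `ℕ₀[x]*`,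
but it divides neither factor: the first quotient would be `q`, and `f ∣ f + 1` would make `f` a
unit. So a prime element is constant or has `f(0) = 0`, and being an atom then forces it to be a
prime number or `X`.
-/

section Coefficients

variable {R : Type*} [Semiring R]

theorem coeff_lt_eval_one_of_coeff_pos [PartialOrder R] [IsOrderedCancelAddMonoid R] {f : R[X]}
    (hf : ∀ n, 0 ≤ f.coeff n) {i j : ℕ} (hji : j ≠ i) (hj : 0 < f.coeff j) :
    f.coeff i < f.eval 1 := by
  have hdeg : f.natDegree < f.natDegree + i + j + 1 := by omega
  simp only [eval_eq_sum_range' hdeg, one_pow, mul_one]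
  exact Finset.single_lt_sum hji (Finset.mem_range.2 (by omega)) (Finset.mem_range.2 (by omega)) hj
    fun k _ _ => hf k

theorem coeff_geom_sum_mul (N : ℕ) (g : R[X]) (k : ℕ) :
    ((∑ j ∈ Finset.range N, X ^ j) * g).coeff k =
      ∑ j ∈ Finset.range N, if j ≤ k then g.coeff (k - j) else 0 := by
  simp only [Finset.sum_mul, finsetSum_coeff, coeff_X_pow_mul']

theorem coeff_geom_sum_mul_eq_eval_one {N k : ℕ} {g : R[X]}
    (hg : g.natDegree ≤ k) (hk : k < N) :
    ((∑ j ∈ Finset.range N, X ^ j) * g).coeff k = g.eval 1 := by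
  have hfilter : (Finset.range N).filter (· ≤ k) = Finset.range (k + 1) := by
    ext j
    simp only [Finset.mem_filter, Finset.mem_range]
    omega
  rw [coeff_geom_sum_mul, ← Finset.sum_filter, hfilter, eval_eq_sum_range' (Nat.lt_succ_of_le hg),
    ← Finset.sum_range_reflect]
  simp only [one_pow, mul_one, Nat.succ_eq_add_one, Nat.add_sub_cancel]
  exact Finset.sum_congr rfl fun j hj => by
    rw [Nat.sub_sub_self (Nat.lt_succ_iff.1 (Finset.mem_range.1 hj))]

theorem coeff_geom_sum_mul_nonneg [PartialOrder R] [IsOrderedAddMonoid R]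
    {g : R[X]} (hg : ∀ n, 0 ≤ g.coeff n) (N k : ℕ) :
    0 ≤ ((∑ j ∈ Finset.range N, X ^ j) * g).coeff k := by
  rw [coeff_geom_sum_mul]
  refine Finset.sum_nonneg fun j _ => ?_
  split_ifs
  exacts [hg _, le_rfl]

end Coefficients

section DippedGeomSum

variable {R : Type*} [Ring R]

/-- The polynomial `b + b x + ⋯ + b x ^ (2 n)` with its middle coefficient replaced by `-1`. For
suitable `b` it is a polynomial with a negative coefficient that has many multiples without one. -/
noncomputable def dippedGeomSum (n : ℕ) (b : R) : R[X] :=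
  C b * ∑ j ∈ Finset.range (2 * n + 1), X ^ j - C (b + 1) * X ^ n

theorem coeff_dippedGeomSum_self (n : ℕ) (b : R) : (dippedGeomSum n b).coeff n = -1 := by
  have hn : n < 2 * n + 1 := by omega
  rw [dippedGeomSum, coeff_sub, coeff_C_mul, coeff_C_mul, finsetSum_coeff]
  simp [coeff_X_pow, hn]

theorem coeff_dippedGeomSum_mul_nonneg [PartialOrder R] [IsOrderedRing R] {n : ℕ} {b : R}
    (hb : 0 ≤ b) {g : R[X]} (hg : ∀ i, 0 ≤ g.coeff i) (hdeg : g.natDegree ≤ n)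
    (hbound : ∀ i, (b + 1) * g.coeff i ≤ b * g.eval 1) (k : ℕ) :
    0 ≤ (dippedGeomSum n b * g).coeff k := by
  have hgeom := mul_nonneg hb (coeff_geom_sum_mul_nonneg hg (2 * n + 1) k)
  rw [dippedGeomSum, sub_mul, mul_assoc, mul_assoc, coeff_sub, coeff_C_mul, coeff_C_mul,
    coeff_X_pow_mul', sub_nonneg]
  rcases lt_or_ge k n with hk | hk
  · rwa [if_neg hk.not_ge, mul_zero]
  rw [if_pos hk]
  rcases le_or_gt k (2 * n) with hk' | hk'
  · rw [coeff_geom_sum_mul_eq_eval_one (hdeg.trans hk) (Nat.lt_succ_of_le hk')]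
    exact hbound (k - n)
  · rwa [coeff_eq_zero_of_natDegree_lt (p := g) (n := k - n) (by omega), mul_zero]

end DippedGeomSum

theorem NNPoly.coeff_lt_eval_one {f : ℤ[X]} (hf : NNPoly f) (h0 : f.coeff 0 ≠ 0)
    (hdeg : f.natDegree ≠ 0) (i : ℕ) : f.coeff i < f.eval 1 := by
  have hlead : f.coeff f.natDegree ≠ 0 :=
    leadingCoeff_ne_zero.2 (ne_zero_of_natDegree_gt (Nat.pos_of_ne_zero hdeg))
  rcases eq_or_ne i 0 with rfl | hi
  · exact coeff_lt_eval_one_of_coeff_pos hf hdeg ((hf _).lt_of_ne' hlead)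
  · exact coeff_lt_eval_one_of_coeff_pos hf hi.symm ((hf 0).lt_of_ne' h0)

theorem NNPoly.nnStar_add_one {f : ℤ[X]} (hf : NNPoly f) : NNStar (f + 1) := by
  refine ⟨fun n => ?_, fun h => ?_⟩
  · rw [coeff_add, coeff_one]
    exact add_nonneg (hf n) (by split_ifs <;> norm_num)
  · have h0 : f.coeff 0 + 1 = 0 := by
      rw [← coeff_one_zero, ← coeff_add, h, coeff_zero]
    have := hf 0
    omega

theorem nnStar_X : NNStar X :=
  ⟨fun n => by rw [coeff_X]; split_ifs <;> norm_num, X_ne_zero⟩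

theorem nnStar_C {a : ℤ} (ha : 0 < a) : NNStar (C a) :=
  ⟨fun n => by rw [coeff_C]; split_ifs <;> omega, C_ne_zero.2 ha.ne'⟩

theorem NNPoly.of_X_mul {k : ℤ[X]} (h : NNPoly (X * k)) : NNPoly k := fun n => by
  simpa only [coeff_X_mul] using h (n + 1)

theorem NNPoly.of_C_mul {a : ℤ} (ha : 0 < a) {k : ℤ[X]} (h : NNPoly (C a * k)) : NNPoly k :=
  fun n => nonneg_of_mul_nonneg_right (by simpa only [coeff_C_mul] using h n) ha

theorem NNPoly.eq_one_of_isUnit {g : ℤ[X]} (hg : NNPoly g) (hu : IsUnit g) : g = 1 := by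
  obtain ⟨u, hunit, rfl⟩ := Polynomial.isUnit_iff.1 hu
  have hu0 : 0 ≤ u := by simpa only [coeff_C_zero] using hg 0
  have hu1 : u = 1 := (Int.isUnit_iff.1 hunit).resolve_right (by omega)
  rw [hu1, C_1]

theorem isAtomN_of_irreducible {f : ℤ[X]} (hf : NNPoly f) (hirr : Irreducible f) : IsAtomN f :=
  ⟨⟨hf, hirr.ne_zero⟩, hirr.ne_one, fun _ _ hg hh e =>
    (hirr.isUnit_or_isUnit e).imp hg.1.eq_one_of_isUnit hh.1.eq_one_of_isUnit⟩

theorem isPrimeN_of_prime {f : ℤ[X]} (hf : NNPoly f) (hprime : Prime f)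
    (hquot : ∀ k, NNPoly (f * k) → NNPoly k) : IsPrimeN f := by
  have dvdN_of_dvd : ∀ g, NNStar g → f ∣ g → DvdN f g := by
    rintro _ hg ⟨k, rfl⟩
    exact ⟨k, ⟨hquot k hg.1, right_ne_zero_of_mul hg.2⟩, rfl⟩
  refine ⟨isAtomN_of_irreducible hf hprime.irreducible, fun g h hg hh ⟨k, _, e⟩ => ?_⟩
  exact (hprime.dvd_or_dvd ⟨k, e⟩).imp (dvdN_of_dvd g hg) (dvdN_of_dvd h hh)

theorem isPrimeN_X : IsPrimeN X :=
  isPrimeN_of_prime nnStar_X.1 prime_X fun _ => NNPoly.of_X_mul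

theorem isPrimeN_C {p : ℕ} (hp : p.Prime) : IsPrimeN (C (p : ℤ)) :=
  have hpos : (0 : ℤ) < p := by exact_mod_cast hp.pos
  isPrimeN_of_prime (nnStar_C hpos).1 (prime_C_iff.2 (Nat.prime_iff_prime_int.1 hp))
    fun _ => NNPoly.of_C_mul hpos

theorem IsAtomN.eq_X {f : ℤ[X]} (hf : IsAtomN f) (h0 : f.coeff 0 = 0) : f = X := by
  obtain ⟨k, rfl⟩ := X_dvd_iff.2 h0
  have hk : NNStar k := ⟨hf.1.1.of_X_mul, right_ne_zero_of_mul hf.1.2⟩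
  rw [(hf.2.2 X k nnStar_X hk rfl).resolve_left prime_X.ne_one, mul_one]

theorem IsAtomN.nat_prime_of_C {n : ℕ} (hn : IsAtomN (C (n : ℤ))) : n.Prime := by
  have hn0 : n ≠ 0 := by
    rintro rfl
    exact hn.1.2 (by simp)
  refine ⟨fun hu => hn.2.1 (by simp [Nat.isUnit_iff.1 hu]), fun a b hab => ?_⟩
  have ha : 0 < a := Nat.pos_of_ne_zero fun h => hn0 (by simp [hab, h])
  have hb : 0 < b := Nat.pos_of_ne_zero fun h => hn0 (by simp [hab, h])
  have hfactor : (C (n : ℤ) : ℤ[X]) = C (a : ℤ) * C (b : ℤ) := by rw [hab, Nat.cast_mul, C_mul]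
  have isUnit_of_C : ∀ m : ℕ, (C (m : ℤ) : ℤ[X]) = 1 → IsUnit m := fun m hm =>
    Nat.isUnit_iff.2 (by exact_mod_cast C_injective (hm.trans C_1.symm))
  exact (hn.2.2 _ _ (nnStar_C (by exact_mod_cast ha)) (nnStar_C (by exact_mod_cast hb))
    hfactor).imp (isUnit_of_C a) (isUnit_of_C b)

theorem IsAtomN.exists_nat_prime {f : ℤ[X]} (hf : IsAtomN f) (hdeg : f.natDegree = 0) :
    ∃ p : ℕ, p.Prime ∧ f = C (p : ℤ) := by
  obtain ⟨c, rfl⟩ := natDegree_eq_zero.1 hdeg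
  have hc : 0 ≤ c := by simpa only [coeff_C_zero] using hf.1.1 0
  lift c to ℕ using hc
  exact ⟨c, hf.nat_prime_of_C, rfl⟩

theorem NNPoly.exists_not_nnPoly_mul_and_mul_add_one {f : ℤ[X]} (hf : NNPoly f) (h0 : f.coeff 0 ≠ 0)
    (hdeg : f.natDegree ≠ 0) :
    ∃ q : ℤ[X], ¬ NNPoly q ∧ NNPoly (q * f) ∧ NNPoly (q * (f + 1)) := by
  have hlt := hf.coeff_lt_eval_one h0 hdeg
  have hpos : 0 ≤ f.eval 1 := (hf 0).trans (hlt 0).le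
  refine ⟨dippedGeomSum f.natDegree (f.eval 1), fun hq => ?_,
    coeff_dippedGeomSum_mul_nonneg hpos hf le_rfl fun i => ?_,
    coeff_dippedGeomSum_mul_nonneg hpos hf.nnStar_add_one.1 natDegree_add_C.le fun i => ?_⟩
  · have hmiddle := hq f.natDegree
    rw [coeff_dippedGeomSum_self] at hmiddle
    omega
  · nlinarith [hlt i]
  · have hi : (f + 1).coeff i ≤ f.eval 1 := by
      rw [coeff_add, coeff_one]
      split_ifs <;> linarith [Int.add_one_le_iff.2 (hlt i)]
    rw [eval_add, eval_one, mul_comm (f.eval 1)]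
    exact mul_le_mul_of_nonneg_left hi (by omega)

theorem IsPrimeN.natDegree_eq_zero {f : ℤ[X]} (hf : IsPrimeN f) (h0 : f.coeff 0 ≠ 0) :
    f.natDegree = 0 := by
  by_contra hdeg
  have hne : f ≠ 0 := hf.1.1.2
  have hf1 : NNStar (f + 1) := hf.1.1.1.nnStar_add_one
  obtain ⟨q, hq, hqf, hqf'⟩ := hf.1.1.1.exists_not_nnPoly_mul_and_mul_add_one h0 hdeg
  have hq0 : q ≠ 0 := by
    rintro rfl
    exact hq fun n => (coeff_zero n).ge
  have hdvd : DvdN f (q * f * (f + 1)) :=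
    ⟨q * (f + 1), ⟨hqf', mul_ne_zero hq0 hf1.2⟩, by ring⟩
  rcases hf.2 _ _ ⟨hqf, mul_ne_zero hq0 hne⟩ hf1 hdvd with ⟨k, hk, e⟩ | ⟨k, -, e⟩
  · rw [mul_comm] at e
    exact hq (mul_left_cancel₀ hne e ▸ hk.1)
  · have hunit : IsUnit f := isUnit_of_dvd_one ((dvd_add_right dvd_rfl).1 ⟨k, e⟩)
    exact hdeg (natDegree_eq_zero_of_isUnit hunit)

/-- The prime elements of the monoid `ℕ₀[x]*` are exactly the prime integers (as constant
polynomials) and the polynomial `x`. -/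
theorem stmt5 (f : Polynomial ℤ) :
    IsPrimeN f ↔ (∃ p : ℕ, p.Prime ∧ f = C (p : ℤ)) ∨ f = X := by
  constructor
  · intro hf
    by_cases h0 : f.coeff 0 = 0
    · exact Or.inr (hf.1.eq_X h0)
    · exact Or.inl (hf.1.exists_nat_prime (hf.natDegree_eq_zero h0))
  · rintro (⟨p, hp, rfl⟩ | rfl)
    · exact isPrimeN_C hp
    · exact isPrimeN_X
end

section
/- Let E := {f(x) ∈ ℤ[x] : f(x)·g(x) ∈ ℕ₀[x]* for some g(x) ∈ ℤ[x]}. Then: (1) E is a multiplicative submonoid of ℤ[x]\{0} containing ℕ₀[x]*; (2) E is divisor-closed in ℤ[x]: if f ∈ E, g ∈ ℤ[x] and g divides f in ℤ[x], then g ∈ E; (3) both inclusions are strict: x² − x + 1 ∈ E\ℕ₀[x]* and x − 1 ∈ ℤ[x]\E; (4) the atoms of the monoid E are exactly the elements of E that are irreducible in ℤ[x]. -/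
/-!
The set `E` is the saturation of the multiplicative submonoid `ℕ₀[x]*` of `ℤ[x]`, so it is a
divisor-closed submonoid, and a factorization in `ℤ[x]` of an element of `E` never leaves `E`.
A nonzero polynomial with nonnegative coefficients is positive at every positive point, hence no
element of `E` has a positive root; this excludes `x - 1`. On the other hand `x² - x + 1` divides
`x³ + 1`.
-/

open Polynomial

/-- `E = {f ∈ ℤ[x] : f·g ∈ ℕ₀[x]* for some g ∈ ℤ[x]}`. -/
def Eset : Set (Polynomial ℤ) := {f | ∃ g : Polynomial ℤ, NNStar (f * g)}

/-- The units of the monoid `E` are `1` and `-1`. -/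
def IsUnitE (f : Polynomial ℤ) : Prop := f = 1 ∨ f = -1

/-- `f` is an atom of the monoid `E`. -/
def IsAtomE (f : Polynomial ℤ) : Prop :=
  f ∈ Eset ∧ ¬ IsUnitE f ∧
    ∀ g h, g ∈ Eset → h ∈ Eset → f = g * h → IsUnitE g ∨ IsUnitE h

section Saturated

variable {M : Type*} [Monoid M] (S : SaturatedSubmonoid M) {f g : M}

theorem mem_saturatedSubmonoid_of_dvd (hf : f ∈ S) (hgf : g ∣ f) : g ∈ S := by
  obtain ⟨k, rfl⟩ := hgf
  exact (S.mulSaturated hf).1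

theorem irreducible_iff_of_mem_saturatedSubmonoid (hf : f ∈ S) :
    Irreducible f ↔
      ¬ IsUnit f ∧ ∀ g h, g ∈ S → h ∈ S → f = g * h → IsUnit g ∨ IsUnit h := by
  rw [irreducible_iff]
  refine and_congr_right fun _ => ⟨fun H g h _ _ hfgh => H hfgh, fun H g h hfgh => ?_⟩
  obtain ⟨hg, hh⟩ := S.mulSaturated (hfgh ▸ hf : g * h ∈ S)
  exact H g h hg hh hfgh

end Saturated

theorem nnPoly_iff_mem_lifts {f : ℤ[X]} : NNPoly f ↔ f ∈ lifts (Nat.castRingHom ℤ) := by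
  rw [lifts_iff_coeff_lifts]
  exact forall_congr' fun n =>
    ⟨fun hn => ⟨(f.coeff n).toNat, Int.toNat_of_nonneg hn⟩, fun ⟨m, hm⟩ => hm ▸ m.cast_nonneg⟩

/-- The submonoid `ℕ₀[x]*` of `ℤ[x]`, whose saturation is `E`: the polynomials that lift to `ℕ[x]`
and are non-zero-divisors, which in the domain `ℤ[x]` means nonzero. -/
noncomputable def nnStarSubmonoid : Submonoid ℤ[X] :=
  (lifts (Nat.castRingHom ℤ)).toSubmonoid ⊓ nonZeroDivisors ℤ[X]

theorem mem_nnStarSubmonoid {f : ℤ[X]} : f ∈ nnStarSubmonoid ↔ NNStar f :=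
  and_congr nnPoly_iff_mem_lifts.symm mem_nonZeroDivisors_iff_ne_zero

theorem mem_saturation_nnStarSubmonoid {f : ℤ[X]} :
    f ∈ nnStarSubmonoid.saturation ↔ f ∈ Eset :=
  Submonoid.mem_saturation_iff.trans (exists_congr fun _ => mem_nnStarSubmonoid)

theorem NNStar.mem_Eset {f : ℤ[X]} (hf : NNStar f) : f ∈ Eset :=
  mem_saturation_nnStarSubmonoid.mp
    (Submonoid.le_toSubmonoid_saturation (mem_nnStarSubmonoid.mpr hf))

theorem mem_Eset_of_dvd {f g : ℤ[X]} (hf : f ∈ Eset) (hgf : g ∣ f) : g ∈ Eset := by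
  rw [← mem_saturation_nnStarSubmonoid] at hf ⊢
  exact mem_saturatedSubmonoid_of_dvd _ hf hgf

theorem one_mem_Eset : (1 : ℤ[X]) ∈ Eset :=
  mem_saturation_nnStarSubmonoid.mp (one_mem _)

theorem mul_mem_Eset {f g : ℤ[X]} (hf : f ∈ Eset) (hg : g ∈ Eset) : f * g ∈ Eset := by
  rw [← mem_saturation_nnStarSubmonoid] at hf hg ⊢
  exact mul_mem hf hg

theorem NNStar.aeval_pos {R : Type*} [Ring R] [PartialOrder R] [IsStrictOrderedRing R]
    {f : ℤ[X]} (hf : NNStar f) {x : R} (hx : 0 < x) : 0 < aeval x f := by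
  rw [aeval_eq_sum_range]
  have term_nonneg (i : ℕ) : 0 ≤ f.coeff i • x ^ i := zsmul_nonneg (pow_pos hx i).le (hf.1 i)
  have leadingCoeff_pos : 0 < f.leadingCoeff :=
    (hf.1 _).lt_of_ne' (leadingCoeff_ne_zero.mpr hf.2)
  exact Finset.sum_pos' (fun i _ => term_nonneg i)
    ⟨f.natDegree, Finset.self_mem_range_succ _, zsmul_pos (pow_pos hx _) leadingCoeff_pos⟩

theorem aeval_ne_zero_of_mem_Eset {R : Type*} [Ring R] [PartialOrder R] [IsStrictOrderedRing R]
    {f : ℤ[X]} (hf : f ∈ Eset) {x : R} (hx : 0 < x) : aeval x f ≠ 0 := by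
  obtain ⟨g, hfg⟩ := hf
  have aeval_mul_pos : 0 < aeval x f * aeval x g := map_mul (aeval x) f g ▸ hfg.aeval_pos hx
  exact left_ne_zero_of_mul aeval_mul_pos.ne'

theorem ne_zero_of_mem_Eset {f : ℤ[X]} (hf : f ∈ Eset) : f ≠ 0 := by
  obtain ⟨g, -, hfg⟩ := hf
  exact left_ne_zero_of_mul hfg

theorem nnStar_one : NNStar 1 :=
  mem_nnStarSubmonoid.mp (one_mem _)

theorem nnStar_X_pow (n : ℕ) : NNStar (X ^ n) :=
  ⟨nnPoly_iff_mem_lifts.mpr (X_pow_mem_lifts _ n), pow_ne_zero n X_ne_zero⟩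

theorem NNStar.add {f g : ℤ[X]} (hf : NNStar f) (hg : NNStar g) : NNStar (f + g) := by
  have aeval_add_pos : 0 < aeval (1 : ℤ) (f + g) :=
    map_add (aeval (1 : ℤ)) f g ▸ add_pos (hf.aeval_pos one_pos) (hg.aeval_pos one_pos)
  refine ⟨fun n => coeff_add f g n ▸ add_nonneg (hf.1 n) (hg.1 n), fun hfg => ?_⟩
  exact aeval_add_pos.ne' (hfg ▸ map_zero _)

theorem X_sq_sub_X_add_one_mem_Eset : (X ^ 2 - X + 1 : ℤ[X]) ∈ Eset := by
  have hdvd : (X ^ 2 - X + 1 : ℤ[X]) ∣ X ^ 3 + 1 := ⟨X + 1, by ring⟩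
  exact mem_Eset_of_dvd ((nnStar_X_pow 3).add nnStar_one).mem_Eset hdvd

theorem not_nnStar_X_sq_sub_X_add_one : ¬ NNStar (X ^ 2 - X + 1 : ℤ[X]) := by
  have coeff_one_eq : (X ^ 2 - X + 1 : ℤ[X]).coeff 1 = -1 := by
    simp [coeff_X, coeff_one, coeff_X_pow]
  exact fun h => absurd (h.1 1) (by simp [coeff_one_eq])

theorem X_sub_one_notMem_Eset : (X - 1 : ℤ[X]) ∉ Eset := fun h =>
  aeval_ne_zero_of_mem_Eset h (one_pos : (0 : ℤ) < 1) (by simp)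

theorem isUnitE_iff_isUnit {f : ℤ[X]} : IsUnitE f ↔ IsUnit f := by
  simp [IsUnitE, Polynomial.isUnit_iff, Int.isUnit_iff, eq_comm (a := f)]

theorem isAtomE_iff_irreducible {f : ℤ[X]} (hf : f ∈ Eset) : IsAtomE f ↔ Irreducible f := by
  rw [irreducible_iff_of_mem_saturatedSubmonoid nnStarSubmonoid.saturation
    (mem_saturation_nnStarSubmonoid.mpr hf)]
  simp only [IsAtomE, hf, true_and, isUnitE_iff_isUnit, mem_saturation_nnStarSubmonoid]

/-- (1) `E` is a submonoid of `ℤ[x] \ {0}` containing `ℕ₀[x]*`; (2) `E` is divisor-closed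
in `ℤ[x]`; (3) both inclusions `ℕ₀[x]* ⊆ E ⊆ ℤ[x] \ {0}` are strict, witnessed by
`x² - x + 1 ∈ E \ ℕ₀[x]*` and `x - 1 ∈ ℤ[x] \ E`; (4) the atoms of `E` are exactly the
elements of `E` irreducible in `ℤ[x]`. -/
theorem stmt10 :
    ((1 : Polynomial ℤ) ∈ Eset ∧ (∀ f ∈ Eset, ∀ g ∈ Eset, f * g ∈ Eset) ∧
      (∀ f ∈ Eset, f ≠ 0) ∧ (∀ f, NNStar f → f ∈ Eset)) ∧
    (∀ f ∈ Eset, ∀ g : Polynomial ℤ, g ∣ f → g ∈ Eset) ∧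
    ((X ^ 2 - X + 1 : Polynomial ℤ) ∈ Eset ∧ ¬ NNStar (X ^ 2 - X + 1 : Polynomial ℤ) ∧
      (X - 1 : Polynomial ℤ) ∉ Eset) ∧
    (∀ f ∈ Eset, (IsAtomE f ↔ Irreducible f)) :=
  ⟨⟨one_mem_Eset, fun _ hf _ hg => mul_mem_Eset hf hg,
      fun _ hf => ne_zero_of_mem_Eset hf, fun _ hf => hf.mem_Eset⟩,
    fun _ hf _ hgf => mem_Eset_of_dvd hf hgf,
    ⟨X_sq_sub_X_add_one_mem_Eset, not_nnStar_X_sq_sub_X_add_one, X_sub_one_notMem_Eset⟩,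
    fun _ hf => isAtomE_iff_irreducible hf⟩
end

section
/- For every λ(x) ∈ B := {λ ∈ ℕ₀[x]* : λ is irreducible in ℤ[x]}, define A_λ := {f(x) ∈ ℤ[x] : λ(x)^k·f(x) ∈ ℕ₀[x]* for some k ∈ ℕ₀}. Then each A_λ contains ℕ₀[x]* and is closed under addition and multiplication, and ⋂_{λ ∈ B} A_λ = ℕ₀[x]*. -/
open Polynomial

/-- `B`: the elements of `ℕ₀[x]*` that are irreducible in `ℤ[x]`. -/
def Bset : Set (Polynomial ℤ) := {l | NNStar l ∧ Irreducible l}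

/-- `A_λ = {f ∈ ℤ[x] : λ^k·f ∈ ℕ₀[x]* for some k ∈ ℕ₀}`. -/
def Aset (l : Polynomial ℤ) : Set (Polynomial ℤ) := {f | ∃ k : ℕ, NNStar (l ^ k * f)}

/-!
Multiplication by `x` only shifts coefficients, so `A_x = ℕ₀[x]*`. Since `x ∈ B` and every `A_λ`
contains `ℕ₀[x]*`, the intersection collapses to `A_x`. That the `A_λ` are closed under addition and
multiplication comes from passing to the common exponent `a + b` of `λ ^ a` and `λ ^ b`.
-/

section PowSaturation

/-- The saturation `M : l^∞` of a submonoid `M` along the powers of `l`: the elements that some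
power of `l` multiplies into `M`. With `M = ℕ₀[x]*` this is `A_l`. -/
def powSaturation {A : Type*} [CommMonoid A] (M : Submonoid A) (l : A) : Submonoid A where
  carrier := {f | ∃ k : ℕ, l ^ k * f ∈ M}
  one_mem' := ⟨0, by simp⟩
  mul_mem' := by
    rintro f g ⟨a, ha⟩ ⟨b, hb⟩
    refine ⟨a + b, ?_⟩
    rw [pow_add, mul_mul_mul_comm]
    exact mul_mem ha hb

theorem le_powSaturation {A : Type*} [CommMonoid A] (M : Submonoid A) (l : A) :
    M ≤ powSaturation M l :=
  fun f hf ↦ ⟨0, by simpa using hf⟩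

theorem add_mem_powSaturation {A : Type*} [CommSemiring A] {M : Submonoid A}
    (hM : ∀ f ∈ M, ∀ g ∈ M, f + g ∈ M) {l : A} (hl : l ∈ M) {f g : A}
    (hf : f ∈ powSaturation M l) (hg : g ∈ powSaturation M l) : f + g ∈ powSaturation M l := by
  obtain ⟨a, ha⟩ := hf
  obtain ⟨b, hb⟩ := hg
  have common_exponent : l ^ (a + b) * (f + g) = l ^ b * (l ^ a * f) + l ^ a * (l ^ b * g) := by
    ring
  refine ⟨a + b, ?_⟩
  rw [common_exponent]
  exact hM _ (mul_mem (pow_mem hl b) ha) _ (mul_mem (pow_mem hl a) hb)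

end PowSaturation

section NonnegCoeffs

variable (R : Type*) [CommSemiring R] [PartialOrder R] [IsOrderedRing R]

/-- The semiring of polynomials over `R` with nonnegative coefficients; it is `ℕ₀[x]` for
`R = ℤ`. -/
def nonnegCoeffs : Subsemiring R[X] where
  carrier := {f | ∀ n, 0 ≤ f.coeff n}
  zero_mem' n := (coeff_zero n).ge
  one_mem' n := by
    rw [coeff_one]
    split_ifs
    exacts [zero_le_one, le_rfl]
  add_mem' hf hg n := by
    rw [coeff_add]
    exact add_nonneg (hf n) (hg n)
  mul_mem' hf hg n := by
    rw [coeff_mul]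
    exact Finset.sum_nonneg fun _ _ ↦ mul_nonneg (hf _) (hg _)

variable {R}

theorem X_mem_nonnegCoeffs : X ∈ nonnegCoeffs R := fun n ↦ by
  rw [coeff_X]
  split_ifs
  exacts [zero_le_one, le_rfl]

theorem X_pow_mul_mem_nonnegCoeffs_iff {k : ℕ} {f : R[X]} :
    X ^ k * f ∈ nonnegCoeffs R ↔ f ∈ nonnegCoeffs R := by
  refine ⟨fun h n ↦ ?_, mul_mem (pow_mem X_mem_nonnegCoeffs k)⟩
  simpa only [coeff_X_pow_mul] using h (n + k)

theorem eq_zero_of_add_eq_zero_of_mem_nonnegCoeffs {f g : R[X]} (hf : f ∈ nonnegCoeffs R)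
    (hg : g ∈ nonnegCoeffs R) (hfg : f + g = 0) : f = 0 := by
  ext n
  have coeff_sum : f.coeff n + g.coeff n = 0 := by rw [← coeff_add, hfg, coeff_zero]
  exact ((add_eq_zero_iff_of_nonneg (hf n) (hg n)).mp coeff_sum).1

variable [NoZeroDivisors R] [Nontrivial R]

variable (R) in
/-- The multiplicative monoid of nonzero polynomials over `R` with nonnegative coefficients; it is
`ℕ₀[x]*` for `R = ℤ`. -/
def nonzeroNonnegCoeffs : Submonoid R[X] where
  carrier := {f | f ∈ nonnegCoeffs R ∧ f ≠ 0}
  one_mem' := ⟨one_mem _, one_ne_zero⟩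
  mul_mem' hf hg := ⟨mul_mem hf.1 hg.1, mul_ne_zero hf.2 hg.2⟩

theorem add_mem_nonzeroNonnegCoeffs {f g : R[X]} (hf : f ∈ nonzeroNonnegCoeffs R)
    (hg : g ∈ nonzeroNonnegCoeffs R) : f + g ∈ nonzeroNonnegCoeffs R :=
  ⟨add_mem hf.1 hg.1, fun h ↦ hf.2 (eq_zero_of_add_eq_zero_of_mem_nonnegCoeffs hf.1 hg.1 h)⟩

theorem powSaturation_nonzeroNonnegCoeffs_X :
    powSaturation (nonzeroNonnegCoeffs R) X = nonzeroNonnegCoeffs R := by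
  refine le_antisymm ?_ (le_powSaturation _ _)
  rintro f ⟨k, hk⟩
  exact ⟨X_pow_mul_mem_nonnegCoeffs_iff.mp hk.1, right_ne_zero_of_mul hk.2⟩

theorem stmt12_general {B : Set R[X]} (hB : B ⊆ nonzeroNonnegCoeffs R) (hX : X ∈ B) :
    (∀ l ∈ B,
      (∀ f ∈ nonzeroNonnegCoeffs R, f ∈ powSaturation (nonzeroNonnegCoeffs R) l) ∧
      (∀ f ∈ powSaturation (nonzeroNonnegCoeffs R) l,
        ∀ g ∈ powSaturation (nonzeroNonnegCoeffs R) l,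
          f + g ∈ powSaturation (nonzeroNonnegCoeffs R) l) ∧
      (∀ f ∈ powSaturation (nonzeroNonnegCoeffs R) l,
        ∀ g ∈ powSaturation (nonzeroNonnegCoeffs R) l,
          f * g ∈ powSaturation (nonzeroNonnegCoeffs R) l)) ∧
    (⋂ l ∈ B, (powSaturation (nonzeroNonnegCoeffs R) l : Set R[X])) = nonzeroNonnegCoeffs R := by
  refine ⟨fun l hl ↦ ⟨fun _ hf ↦ le_powSaturation _ l hf, fun _ hf _ hg ↦ ?_,
    fun _ hf _ hg ↦ mul_mem hf hg⟩, Set.Subset.antisymm ?_ ?_⟩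
  · exact add_mem_powSaturation (fun _ hp _ hq ↦ add_mem_nonzeroNonnegCoeffs hp hq) (hB hl) hf hg
  · exact (Set.biInter_subset_of_mem hX).trans powSaturation_nonzeroNonnegCoeffs_X.le
  · exact Set.subset_iInter₂ fun l _ ↦ le_powSaturation _ l

end NonnegCoeffs

/-- For every `λ ∈ B`, the set `A_λ` contains `ℕ₀[x]*` and is closed under addition and
multiplication, and `⋂_{λ ∈ B} A_λ = ℕ₀[x]*`. -/
theorem stmt12 :
    (∀ l ∈ Bset,
      (∀ f, NNStar f → f ∈ Aset l) ∧
      (∀ f ∈ Aset l, ∀ g ∈ Aset l, f + g ∈ Aset l) ∧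
      (∀ f ∈ Aset l, ∀ g ∈ Aset l, f * g ∈ Aset l)) ∧
    (⋂ l ∈ Bset, Aset l) = {f : Polynomial ℤ | NNStar f} :=
  stmt12_general (fun _ hl ↦ hl.1) ⟨⟨X_mem_nonnegCoeffs, X_ne_zero⟩, irreducible_X⟩
end

section
/- For every n ∈ ℕ, the polynomial xⁿ + 2 is irreducible in ℤ[x]. Moreover, if f(x) ∈ ℤ[x]\ℕ₀[x] is a polynomial of degree d (so f has at least one negative coefficient), then (x^{d+1} + 2)^k·f(x) ∉ ℕ₀[x] for every k ∈ ℕ. -/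
open Polynomial

section Irreducible

variable {R : Type*} [CommRing R] [IsDomain R] {p : R} {n : ℕ}

theorem isEisensteinAt_X_pow_add_C (hp : Prime p) (hn : n ≠ 0) :
    (X ^ n + C p : R[X]).IsEisensteinAt (Ideal.span {p}) := by
  have p_notMem_sq : p ∉ Ideal.span {p} ^ 2 := by
    rw [Ideal.span_singleton_pow, Ideal.mem_span_singleton, pow_two]
    exact fun h ↦ hp.not_isUnit (hp.squarefree p h)
  refine (monic_X_pow_add_C p hn).isEisensteinAt_of_mem_of_notMem
    (mt Ideal.span_singleton_eq_top.1 hp.not_isUnit) (fun hi ↦ ?_) ?_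
  · rw [natDegree_X_pow_add_C] at hi
    rw [coeff_add, coeff_X_pow, if_neg hi.ne, zero_add, coeff_C]
    split_ifs
    · exact Ideal.mem_span_singleton_self p
    · exact Ideal.zero_mem _
  · rwa [coeff_add, coeff_X_pow, if_neg hn.symm, zero_add, coeff_C_zero]

theorem irreducible_X_pow_add_C (hp : Prime p) (hn : n ≠ 0) :
    Irreducible (X ^ n + C p : R[X]) :=
  (isEisensteinAt_X_pow_add_C hp hn).irreducible
    ((Ideal.span_singleton_prime hp.ne_zero).2 hp) (monic_X_pow_add_C p hn).isPrimitive
    ((Nat.pos_of_ne_zero hn).trans_eq natDegree_X_pow_add_C.symm)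

end Irreducible

-- Modulo `X ^ m` the factor `X ^ m + C a` is the constant `a`.
theorem coeff_X_pow_add_C_pow_mul_of_lt {R : Type*} [Semiring R] (a : R) (f : R[X]) {m i : ℕ}
    (hi : i < m) (k : ℕ) : ((X ^ m + C a) ^ k * f).coeff i = a ^ k * f.coeff i := by
  induction k with
  | zero => simp only [pow_zero, one_mul]
  | succ k ih =>
    rw [pow_succ', mul_assoc, add_mul, coeff_add, coeff_X_pow_mul', if_neg hi.not_ge, zero_add,
      coeff_C_mul, ih, pow_succ', mul_assoc]

theorem coeff_nonneg_of_X_pow_add_C_pow_mul {R : Type*} [Semiring R] [LinearOrder R]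
    [IsStrictOrderedRing R] {a : R} (ha : 0 < a) {f : R[X]} {m : ℕ} (hm : f.natDegree < m) {k : ℕ}
    (h : ∀ i, 0 ≤ ((X ^ m + C a) ^ k * f).coeff i) (i : ℕ) : 0 ≤ f.coeff i := by
  rcases lt_or_ge i m with hi | hi
  · have h_low := h i
    rw [coeff_X_pow_add_C_pow_mul_of_lt a f hi] at h_low
    exact nonneg_of_mul_nonneg_right h_low (pow_pos ha k)
  · exact (coeff_eq_zero_of_natDegree_lt (hm.trans_le hi)).ge

theorem stmt13_general {R : Type*} [CommRing R] [LinearOrder R] [IsStrictOrderedRing R] {p : R}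
    (hp : Prime p) (hpos : 0 < p) :
    (∀ n : ℕ, n ≠ 0 → Irreducible (X ^ n + C p : R[X])) ∧
    (∀ f : R[X], (¬ ∀ i, 0 ≤ f.coeff i) → ∀ m, f.natDegree < m → ∀ k : ℕ,
      ¬ ∀ i, 0 ≤ ((X ^ m + C p) ^ k * f).coeff i) :=
  ⟨fun _ hn ↦ irreducible_X_pow_add_C hp hn,
    fun _ hf _ hm _ ↦ mt (coeff_nonneg_of_X_pow_add_C_pow_mul hpos hm) hf⟩

/-- For every `n ≥ 1` the polynomial `xⁿ + 2` is irreducible in `ℤ[x]`; moreover, if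
`f ∈ ℤ[x] \ ℕ₀[x]` has degree `d`, then `(x^(d+1) + 2)^k · f ∉ ℕ₀[x]` for every `k ≥ 1`. -/
theorem stmt13 :
    (∀ n : ℕ, 1 ≤ n → Irreducible (X ^ n + C 2 : Polynomial ℤ)) ∧
    (∀ f : Polynomial ℤ, ¬ NNPoly f → ∀ k : ℕ, 1 ≤ k →
      ¬ NNPoly ((X ^ (f.natDegree + 1) + C 2) ^ k * f)) :=
  have ⟨h_irreducible, h_notNN⟩ := stmt13_general Int.prime_two two_pos
  ⟨fun n hn ↦ h_irreducible n (Nat.ne_zero_of_lt hn),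
    fun f hf k _ ↦ h_notNN f hf _ (Nat.lt_succ_self _) k⟩
end

section
/- If f(x), g(x) ∈ ℕ₀[x]* and there exists an integer n ≥ 1 such that g(x)ⁿ divides f(x)ⁿ in ℕ₀[x]* (i.e., f ⁿ = gⁿ·h for some h ∈ ℕ₀[x]*), then g(x) divides f(x) in ℤ[x]. Moreover, for every integer n ≥ 1, the polynomial (x−1)ⁿ has a negative coefficient, i.e., (x−1)ⁿ ∉ ℕ₀[x]. Consequently, the root closure of ℕ₀[x]* inside its quotient group is contained in ℤ[x] and does not contain x−1. -/
open Polynomial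

theorem eval_pos_of_coeff_nonneg {R : Type*} [Semiring R] [PartialOrder R]
    [IsStrictOrderedRing R] {p : R[X]} (hp : ∀ k, 0 ≤ p.coeff k) (hp0 : p ≠ 0)
    {a : R} (ha : 0 < a) : 0 < p.eval a := by
  rw [eval_eq_sum]
  refine Finset.sum_pos (fun k hk ↦ ?_) (support_nonempty.mpr hp0)
  exact mul_pos ((hp k).lt_of_ne' (mem_support_iff.mp hk)) (pow_pos ha k)

theorem not_forall_coeff_X_sub_C_pow_nonneg {R : Type*} [CommRing R] [PartialOrder R]
    [IsStrictOrderedRing R] {a : R} (ha : 0 < a) {n : ℕ} (hn : n ≠ 0) :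
    ¬ ∀ k, 0 ≤ ((X - C a) ^ n).coeff k := by
  intro hnonneg
  have hpos := eval_pos_of_coeff_nonneg hnonneg ((monic_X_sub_C a).pow n).ne_zero ha
  have hroot : ((X - C a) ^ n).eval a = 0 := by simp [hn]
  exact hpos.ne' hroot

theorem stmt17_general {R : Type*} [CommRing R] [IsDomain R] [IsIntegrallyClosed R]
    [PartialOrder R] [IsStrictOrderedRing R] :
    (∀ (f g : R[X]) (n : ℕ), 1 ≤ n → g ^ n ∣ f ^ n → g ∣ f) ∧
    (∀ a : R, 0 < a → ∀ n : ℕ, 1 ≤ n → ¬ ∀ k, 0 ≤ ((X - C a) ^ n).coeff k) :=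
  ⟨fun _ _ _ hn ↦ (IsIntegrallyClosed.pow_dvd_pow_iff (Nat.one_le_iff_ne_zero.mp hn)).mp,
    fun _ ha _ hn ↦ not_forall_coeff_X_sub_C_pow_nonneg ha (Nat.one_le_iff_ne_zero.mp hn)⟩

/-- If `f, g ∈ ℕ₀[x]*` and `gⁿ ∣ fⁿ` in `ℕ₀[x]*` for some `n ≥ 1`, then `g ∣ f` in
`ℤ[x]`; moreover `(x-1)ⁿ ∉ ℕ₀[x]` for every `n ≥ 1`. Consequently, every element of the
root closure of `ℕ₀[x]*` lies in `ℤ[x]`, and `x - 1` does not belong to the root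
closure. -/
theorem stmt17 :
    (∀ f g : Polynomial ℤ, NNStar f → NNStar g →
      (∃ n : ℕ, 1 ≤ n ∧ ∃ h, NNStar h ∧ f ^ n = g ^ n * h) → g ∣ f) ∧
    (∀ n : ℕ, 1 ≤ n → ¬ NNPoly ((X - 1 : Polynomial ℤ) ^ n)) ∧
    (¬ ∃ n : ℕ, 1 ≤ n ∧ NNStar ((X - 1 : Polynomial ℤ) ^ n)) := by
  have not_nonneg : ∀ n : ℕ, 1 ≤ n → ¬ NNPoly ((X - 1 : ℤ[X]) ^ n) := by
    simpa only [NNPoly, C_1] using stmt17_general.2 (1 : ℤ) one_pos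
  exact ⟨fun f g _ _ ⟨n, hn, h, _, hfg⟩ ↦ stmt17_general.1 f g n hn ⟨h, hfg⟩,
    not_nonneg, fun ⟨n, hn, hstar⟩ ↦ not_nonneg n hn hstar.1⟩
end
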